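/- (Gibbs–Boltzmann tail bound for simulated annealing.) Let Θ ⊆ ℝ^p be compact with finite positive Lebesgue volume vol(Θ), Q : Θ → ℝ continuous with unique minimizer θ̂ ∈ interior(Θ), and suppose: (a) there exist ε₁ > 0 and 0 < λ̲ ≤ λ̄ < ∞ with λ̄·‖θ−θ̂‖² ≥ Q(θ) − Q(θ̂) ≥ λ̲·‖θ−θ̂‖² for ‖θ−θ̂‖ ≤ ε₁ (with the ball of radius ε₁ around θ̂ contained in Θ); (b) there exists ε₂ ∈ (0, ε₁] with Q(θ) − Q(θ̂) ≥ λ̄·ε₂² whenever ‖θ−θ̂‖ ≥ ε₁, θ ∈ Θ. Let T_k = T₁/log(k) for k ≥ 2 with T_k ≤ ε₁², and define the Gibbs measure f_k(θ) ∝ exp(−[Q(θ)−Q(θ̂)]/T_k) on Θ. Then the f_k-probability of the event {‖θ−θ̂‖ ≥ ε₁} is at most [vol(Θ) / ∫_{‖h‖≤1} exp(−λ̄‖h‖²) dh] · T_k^{−p/2} · k^{−λ̄ε₂²/T₁} = C·(log k)^{p/2}·k^{−λ̄ε₂²/T₁} for an explicit constant C depending only on vol(Θ), λ̄, T₁, p.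 -/

import Mathlib

open Matrix Set MeasureTheory
open scoped BigOperators

noncomputable section

/-- Euclidean norm of a vector in `Fin n → ℝ`. -/
def enorm' {n : ℕ} (v : Fin n → ℝ) : ℝ := Real.sqrt (∑ i, v i ^ 2)

/-- Smallest singular value of a matrix. -/
def sigMin {m p : ℕ} (A : Matrix (Fin m) (Fin p) ℝ) : ℝ :=
  sInf {c : ℝ | ∃ v : Fin p → ℝ, enorm' v = 1 ∧ c = enorm' (A *ᵥ v)}

/-- Largest singular value of a matrix (operator norm). -/
def sigMax {m p : ℕ} (A : Matrix (Fin m) (Fin p) ℝ) : ℝ :=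
  sSup {c : ℝ | ∃ v : Fin p → ℝ, enorm' v = 1 ∧ c = enorm' (A *ᵥ v)}

/-- Smallest eigenvalue of a (symmetric) square matrix, via the Rayleigh quotient. -/
def lamMin {n : ℕ} (A : Matrix (Fin n) (Fin n) ℝ) : ℝ :=
  sInf {c : ℝ | ∃ v : Fin n → ℝ, enorm' v = 1 ∧ c = v ⬝ᵥ (A *ᵥ v)}

/-- Largest eigenvalue of a (symmetric) square matrix, via the Rayleigh quotient. -/
def lamMax {n : ℕ} (A : Matrix (Fin n) (Fin n) ℝ) : ℝ :=
  sSup {c : ℝ | ∃ v : Fin n → ℝ, enorm' v = 1 ∧ c = v ⬝ᵥ (A *ᵥ v)}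

/-- Weighted norm `‖v‖_W = √(vᵀ W v)`. -/
def wnorm {m : ℕ} (W : Matrix (Fin m) (Fin m) ℝ) (v : Fin m → ℝ) : ℝ :=
  Real.sqrt (v ⬝ᵥ (W *ᵥ v))

/-- A matrix viewed as a continuous linear map `ℝ^p → ℝ^m`. -/
def toCLM {m p : ℕ} (A : Matrix (Fin m) (Fin p) ℝ) : (Fin p → ℝ) →L[ℝ] (Fin m → ℝ) :=
  LinearMap.toContinuousLinearMap A.mulVecLin

/-!
With `V θ = Q θ - Q θhat`, rescale by `h = (θ - θhat) / √T`: on the ball of radius `√T` the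
quadratic upper bound on `V` makes the Gibbs weight `exp (-V θ / T)` at least
`exp (-lamhi * ‖h‖ ^ 2)`, so the partition function is at least `T ^ (p / 2)` times a fixed Gaussian
integral over the unit ball. On the tail the weight is at most `exp (-lamhi * ε₂ ^ 2 / T)`, and the
logarithmic cooling schedule `T = T₁ / log k` makes this a power of `k`.
-/

section Rescaling

variable {E : Type*} [NormedAddCommGroup E] [NormedSpace ℝ E] [MeasurableSpace E]
  [BorelSpace E] {r : ℝ}

theorem measurableEmbedding_inv_smul_sub (hr : r ≠ 0) (a : E) :
    MeasurableEmbedding fun x : E => r⁻¹ • (x - a) :=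
  (measurableEmbedding_const_smul₀ (inv_ne_zero hr)).comp (measurableEmbedding_subRight a)

variable [FiniteDimensional ℝ E] (μ : Measure E) [μ.IsAddHaarMeasure]

theorem map_inv_smul_sub_addHaar (hr : 0 < r) (a : E) :
    μ.map (fun x => r⁻¹ • (x - a)) = ENNReal.ofReal (r ^ Module.finrank ℝ E) • μ := by
  have hcomp : (fun x : E => r⁻¹ • (x - a)) = (r⁻¹ • ·) ∘ (· - a) := rfl
  rw [hcomp, ← Measure.map_map (measurable_const_smul _) (measurable_sub_const a),
    (measurePreserving_sub_right μ a).map_eq, Measure.map_addHaar_smul μ (inv_ne_zero hr.ne'),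
    inv_pow, inv_inv, abs_of_pos (pow_pos hr _)]

theorem setIntegral_preimage_inv_smul_sub {F : Type*} [NormedAddCommGroup F] [NormedSpace ℝ F]
    (hr : 0 < r) (a : E) (s : Set E) (f : E → F) :
    ∫ x in (fun x => r⁻¹ • (x - a)) ⁻¹' s, f (r⁻¹ • (x - a)) ∂μ
      = r ^ Module.finrank ℝ E • ∫ h in s, f h ∂μ := by
  rw [← (measurableEmbedding_inv_smul_sub hr.ne' a).setIntegral_map, map_inv_smul_sub_addHaar μ hr,
    Measure.restrict_smul, integral_smul_measure, ENNReal.toReal_ofReal (pow_nonneg hr.le _)]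

theorem measure_preimage_inv_smul_sub (hr : 0 < r) (a : E) (s : Set E) :
    μ ((fun x => r⁻¹ • (x - a)) ⁻¹' s) = ENNReal.ofReal (r ^ Module.finrank ℝ E) * μ s := by
  rw [← (measurableEmbedding_inv_smul_sub hr.ne' a).map_apply, map_inv_smul_sub_addHaar μ hr,
    Measure.smul_apply, smul_eq_mul]

end Rescaling

section SeminormScaling

variable {E : Type*} [AddCommGroup E] [Module ℝ E] (N : Seminorm ℝ E) {r : ℝ}

theorem seminorm_inv_smul (hr : 0 ≤ r) (v : E) : N (r⁻¹ • v) = r⁻¹ * N v := by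
  rw [map_smul_eq_mul, Real.norm_of_nonneg (inv_nonneg.2 hr)]

theorem preimage_inv_smul_sub_seminorm_le_one (hr : 0 < r) (a : E) :
    (fun x => r⁻¹ • (x - a)) ⁻¹' {h | N h ≤ 1} = {x | N (x - a) ≤ r} := by
  ext x
  rw [mem_preimage, mem_ofPred_eq, mem_ofPred_eq, seminorm_inv_smul N hr.le,
    inv_mul_le_iff₀ hr, mul_one]

end SeminormScaling

section SeminormBall

variable {E : Type*} [NormedAddCommGroup E] [NormedSpace ℝ E] [FiniteDimensional ℝ E]
  (N : Seminorm ℝ E)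

theorem continuous_seminorm_of_finiteDimensional : Continuous N :=
  N.convexOn.locallyLipschitz.continuous

variable [MeasurableSpace E] (μ : Measure E)

theorem measure_seminorm_le_one_ne_zero [μ.IsOpenPosMeasure] : μ {h | N h ≤ 1} ≠ 0 := by
  have hopen : IsOpen {h | N h < 1} :=
    isOpen_lt (continuous_seminorm_of_finiteDimensional N) continuous_const
  have hpos : 0 < μ {h | N h < 1} := hopen.measure_pos μ ⟨0, by simp⟩
  exact (hpos.trans_le (measure_mono fun h (hh : N h < 1) => hh.le)).ne'

variable [BorelSpace E]

theorem measure_seminorm_le_one_ne_top [μ.IsAddHaarMeasure] {r : ℝ} (hr : 0 < r) {a : E}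
    (hfin : μ {x | N (x - a) ≤ r} ≠ ⊤) : μ {h | N h ≤ 1} ≠ ⊤ := by
  rw [← preimage_inv_smul_sub_seminorm_le_one N hr a, measure_preimage_inv_smul_sub μ hr] at hfin
  have hscale : ENNReal.ofReal (r ^ Module.finrank ℝ E) ≠ 0 := by simpa using pow_pos hr _
  exact (ENNReal.lt_top_of_mul_ne_top_right hfin hscale).ne

theorem setIntegral_exp_neg_mul_seminorm_sq_pos [μ.IsOpenPosMeasure] (lam : ℝ)
    (hfin : μ {h | N h ≤ 1} ≠ ⊤) :
    0 < ∫ h in {h | N h ≤ 1}, Real.exp (-lam * N h ^ 2) ∂μ := by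
  have hN := continuous_seminorm_of_finiteDimensional N
  have hmeas : MeasurableSet {h | N h ≤ 1} := (isClosed_le hN continuous_const).measurableSet
  have hbound : ∀ h ∈ {h | N h ≤ 1}, ‖Real.exp (-lam * N h ^ 2)‖ ≤ Real.exp |lam| := by
    intro h hh
    have hsq : N h ^ 2 ≤ 1 := pow_le_one₀ (apply_nonneg N h) hh
    rw [Real.norm_of_nonneg (Real.exp_nonneg _), Real.exp_le_exp]
    calc -lam * N h ^ 2 ≤ |lam| * N h ^ 2 := by gcongr; exact neg_le_abs lam
      _ ≤ |lam| := mul_le_of_le_one_right (abs_nonneg lam) hsq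
  have hint : IntegrableOn (fun h => Real.exp (-lam * N h ^ 2)) {h | N h ≤ 1} μ :=
    Measure.integrableOn_of_bounded hfin
      (by fun_prop : Continuous fun h => Real.exp (-lam * N h ^ 2)).aestronglyMeasurable
      (ae_restrict_of_forall_mem hmeas hbound)
  have : NeZero (μ.restrict {h | N h ≤ 1}) :=
    ⟨by simpa using measure_seminorm_le_one_ne_zero N μ⟩
  exact integral_exp_pos hint

end SeminormBall

section GibbsWeight

theorem setIntegral_exp_neg_div_le {α : Type*} [MeasurableSpace α] {μ : Measure α} {S : Set α}
    {V : α → ℝ} {c T : ℝ} (hS : μ S ≠ ⊤) (hT : 0 ≤ T) (hV : ∀ x ∈ S, c ≤ V x) :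
    ∫ x in S, Real.exp (-V x / T) ∂μ ≤ μ.real S * Real.exp (-c / T) := by
  have hbound : ∀ x ∈ S, ‖Real.exp (-V x / T)‖ ≤ Real.exp (-c / T) := by
    intro x hx
    rw [Real.norm_of_nonneg (Real.exp_nonneg _)]
    gcongr
    exact hV x hx
  rw [mul_comm]
  exact (Real.le_norm_self _).trans (norm_setIntegral_le_of_norm_le_const hS.lt_top hbound)

variable {E : Type*} [NormedAddCommGroup E] [NormedSpace ℝ E] [FiniteDimensional ℝ E]
  [MeasurableSpace E] [BorelSpace E] (μ : Measure E) [μ.IsAddHaarMeasure] (N : Seminorm ℝ E)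
  {Θ S : Set E} {V : E → ℝ} {a : E} {lam c T : ℝ}

theorem setIntegral_exp_neg_mul_seminorm_sq_div (lam : ℝ) (a : E) (hT : 0 < T) :
    ∫ x in {x | N (x - a) ≤ √T}, Real.exp (-(lam * N (x - a) ^ 2) / T) ∂μ
      = T ^ ((Module.finrank ℝ E : ℝ) / 2)
        * ∫ h in {h | N h ≤ 1}, Real.exp (-lam * N h ^ 2) ∂μ := by
  have hsqrt : 0 < √T := Real.sqrt_pos.2 hT
  have hweight (x : E) :
      Real.exp (-(lam * N (x - a) ^ 2) / T) = Real.exp (-lam * N ((√T)⁻¹ • (x - a)) ^ 2) := by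
    rw [seminorm_inv_smul N hsqrt.le, mul_pow, inv_pow, Real.sq_sqrt hT.le]
    ring_nf
  have hpow : √T ^ Module.finrank ℝ E = T ^ ((Module.finrank ℝ E : ℝ) / 2) := by
    rw [Real.rpow_div_two_eq_sqrt _ hT.le, Real.rpow_natCast]
  simp_rw [hweight]
  rw [← preimage_inv_smul_sub_seminorm_le_one N hsqrt a,
    setIntegral_preimage_inv_smul_sub μ hsqrt a _ fun h => Real.exp (-lam * N h ^ 2),
    hpow, smul_eq_mul]

theorem rpow_mul_setIntegral_exp_le_setIntegral_exp_neg_div (hT : 0 < T)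
    (hint : IntegrableOn (fun x => Real.exp (-V x / T)) Θ μ)
    (hball : {x | N (x - a) ≤ √T} ⊆ Θ)
    (hquad : ∀ x, N (x - a) ≤ √T → V x ≤ lam * N (x - a) ^ 2) :
    T ^ ((Module.finrank ℝ E : ℝ) / 2) * ∫ h in {h | N h ≤ 1}, Real.exp (-lam * N h ^ 2) ∂μ
      ≤ ∫ x in Θ, Real.exp (-V x / T) ∂μ := by
  have hN := continuous_seminorm_of_finiteDimensional N
  have hmeas : MeasurableSet {x | N (x - a) ≤ √T} :=
    (isClosed_le (by fun_prop) continuous_const).measurableSet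
  rw [← setIntegral_exp_neg_mul_seminorm_sq_div μ N lam a hT]
  calc ∫ x in {x | N (x - a) ≤ √T}, Real.exp (-(lam * N (x - a) ^ 2) / T) ∂μ
      ≤ ∫ x in {x | N (x - a) ≤ √T}, Real.exp (-V x / T) ∂μ := by
        refine integral_mono_of_nonneg (ae_of_all _ fun x => Real.exp_nonneg _)
          (hint.mono_set hball) (ae_restrict_of_forall_mem hmeas fun x hx => ?_)
        dsimp only
        gcongr
        exact hquad x hx
    _ ≤ ∫ x in Θ, Real.exp (-V x / T) ∂μ :=
        setIntegral_mono_set hint (ae_of_all _ fun x => Real.exp_nonneg _) hball.eventuallyLE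

theorem setIntegral_exp_neg_div_div_setIntegral_le (hT : 0 < T) (hΘ : μ Θ ≠ ⊤) (hSΘ : S ⊆ Θ)
    (hint : IntegrableOn (fun x => Real.exp (-V x / T)) Θ μ)
    (hball : {x | N (x - a) ≤ √T} ⊆ Θ)
    (hquad : ∀ x, N (x - a) ≤ √T → V x ≤ lam * N (x - a) ^ 2)
    (hgap : ∀ x ∈ S, c ≤ V x) :
    (∫ x in S, Real.exp (-V x / T) ∂μ) / (∫ x in Θ, Real.exp (-V x / T) ∂μ)
      ≤ (μ.real Θ / ∫ h in {h | N h ≤ 1}, Real.exp (-lam * N h ^ 2) ∂μ)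
          * T ^ (-(Module.finrank ℝ E : ℝ) / 2) * Real.exp (-c / T) := by
  have hgauss := setIntegral_exp_neg_mul_seminorm_sq_pos N μ lam
    (measure_seminorm_le_one_ne_top N μ (Real.sqrt_pos.2 hT) (measure_ne_top_of_subset hball hΘ))
  have hnum : ∫ x in S, Real.exp (-V x / T) ∂μ ≤ μ.real Θ * Real.exp (-c / T) :=
    (setIntegral_exp_neg_div_le (measure_ne_top_of_subset hSΘ hΘ) hT.le hgap).trans
      (by gcongr)
  have hden := rpow_mul_setIntegral_exp_le_setIntegral_exp_neg_div μ N hT hint hball hquad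
  calc _ ≤ μ.real Θ * Real.exp (-c / T) / (T ^ ((Module.finrank ℝ E : ℝ) / 2)
          * ∫ h in {h | N h ≤ 1}, Real.exp (-lam * N h ^ 2) ∂μ) :=
        div_le_div₀ (by positivity) hnum (by positivity) hden
    _ = _ := by
        rw [neg_div 2, Real.rpow_neg hT.le]
        field_simp

end GibbsWeight

theorem exp_div_div_log_eq_rpow {k : ℝ} (hk : 0 < k) (b T₁ : ℝ) :
    Real.exp (b / (T₁ / Real.log k)) = k ^ (b / T₁) := by
  rw [Real.rpow_def_of_pos hk, div_div_eq_mul_div]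
  ring_nf

theorem div_rpow_neg_eq_mul {x y : ℝ} (hx : 0 ≤ x) (hy : 0 ≤ y) (s : ℝ) :
    (x / y) ^ (-s) = x ^ (-s) * y ^ s := by
  rw [Real.div_rpow hx hy, Real.rpow_neg hy, div_inv_eq_mul]

theorem enorm'_eq_norm_toLp {n : ℕ} (v : Fin n → ℝ) : enorm' v = ‖WithLp.toLp 2 v‖ := by
  simp [enorm', EuclideanSpace.norm_eq]

/-- The Euclidean norm `enorm'` bundled as a seminorm, so that facts about seminorms apply to it on
`Fin n → ℝ`, whose own norm is the supremum norm. -/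
def euclideanSeminorm (n : ℕ) : Seminorm ℝ (Fin n → ℝ) :=
  Seminorm.of enorm'
    (fun v w => by simpa only [enorm'_eq_norm_toLp, WithLp.toLp_add] using norm_add_le _ _)
    (fun c v => by simp only [enorm'_eq_norm_toLp, WithLp.toLp_smul, norm_smul])

theorem euclideanSeminorm_apply {n : ℕ} (v : Fin n → ℝ) : euclideanSeminorm n v = enorm' v :=
  rfl

theorem gibbs_tail_bound_general {E : Type*} [NormedAddCommGroup E] [NormedSpace ℝ E]
    [FiniteDimensional ℝ E] [MeasurableSpace E] [BorelSpace E] (μ : Measure E)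
    [μ.IsAddHaarMeasure] (N : Seminorm ℝ E) {Θ : Set E} {Q : E → ℝ} {θhat : E}
    {ε lam c T₁ T k : ℝ} (hΘ : μ Θ ≠ ⊤)
    (hint : IntegrableOn (fun θ => Real.exp (-(Q θ - Q θhat) / T)) Θ μ) (hε : 0 ≤ ε)
    (hball : {θ | N (θ - θhat) ≤ ε} ⊆ Θ)
    (hquad : ∀ θ, N (θ - θhat) ≤ ε → Q θ - Q θhat ≤ lam * N (θ - θhat) ^ 2)
    (hgap : ∀ θ ∈ Θ, ε ≤ N (θ - θhat) → c ≤ Q θ - Q θhat)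
    (hT₁ : 0 < T₁) (hk : 1 < k) (hT : T = T₁ / Real.log k) (hTε : T ≤ ε ^ 2) :
    (∫ θ in {θ ∈ Θ | ε ≤ N (θ - θhat)}, Real.exp (-(Q θ - Q θhat) / T) ∂μ) /
        (∫ θ in Θ, Real.exp (-(Q θ - Q θhat) / T) ∂μ)
      ≤ (μ.real Θ / ∫ h in {h | N h ≤ 1}, Real.exp (-lam * N h ^ 2) ∂μ)
          * T ^ (-(Module.finrank ℝ E : ℝ) / 2) * k ^ (-c / T₁)
    ∧ (μ.real Θ / ∫ h in {h | N h ≤ 1}, Real.exp (-lam * N h ^ 2) ∂μ)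
          * T ^ (-(Module.finrank ℝ E : ℝ) / 2) * k ^ (-c / T₁)
      = (μ.real Θ * T₁ ^ (-(Module.finrank ℝ E : ℝ) / 2) /
            ∫ h in {h | N h ≤ 1}, Real.exp (-lam * N h ^ 2) ∂μ)
          * Real.log k ^ ((Module.finrank ℝ E : ℝ) / 2) * k ^ (-c / T₁) := by
  have hlog : 0 < Real.log k := Real.log_pos hk
  have hTpos : 0 < T := hT ▸ div_pos hT₁ hlog
  have hsqrt : √T ≤ ε := Real.sqrt_le_iff.2 ⟨hε, hTε⟩
  constructor
  · have hexp : Real.exp (-c / T) = k ^ (-c / T₁) :=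
      hT ▸ exp_div_div_log_eq_rpow (one_pos.trans hk) (-c) T₁
    rw [← hexp]
    exact setIntegral_exp_neg_div_div_setIntegral_le μ N hTpos hΘ (sep_subset _ _) hint
      (fun θ hθ => hball (le_trans hθ hsqrt)) (fun θ hθ => hquad θ (hθ.trans hsqrt))
      fun θ hθ => hgap θ hθ.1 hθ.2
  · rw [hT, neg_div, div_rpow_neg_eq_mul hT₁.le hlog.le]
    ring

/-- Gibbs–Boltzmann tail bound for simulated annealing. -/
theorem gibbs_tail_bound
    {p : ℕ} (Θ : Set (Fin p → ℝ)) (Q : (Fin p → ℝ) → ℝ)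
    (θhat : Fin p → ℝ) (ε₁ ε₂ lamlo lamhi T₁ T : ℝ) (k : ℕ)
    (hΘcomp : IsCompact Θ)
    (hvol0 : volume Θ ≠ 0) (hvolfin : volume Θ < ⊤)
    (hQ : ContinuousOn Q Θ)
    (hθhat : θhat ∈ interior Θ)
    (hmin : ∀ θ ∈ Θ, θ ≠ θhat → Q θhat < Q θ)
    (hε₁ : 0 < ε₁) (hlamlo : 0 < lamlo) (hlam : lamlo ≤ lamhi)
    (hball : {θ : Fin p → ℝ | enorm' (θ - θhat) ≤ ε₁} ⊆ Θ)
    (ha : ∀ θ : Fin p → ℝ, enorm' (θ - θhat) ≤ ε₁ →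
      lamlo * enorm' (θ - θhat) ^ 2 ≤ Q θ - Q θhat
        ∧ Q θ - Q θhat ≤ lamhi * enorm' (θ - θhat) ^ 2)
    (hε₂ : 0 < ε₂) (hε₂₁ : ε₂ ≤ ε₁)
    (hb : ∀ θ ∈ Θ, ε₁ ≤ enorm' (θ - θhat) → lamhi * ε₂ ^ 2 ≤ Q θ - Q θhat)
    (hT₁ : 0 < T₁) (hk : 2 ≤ k)
    (hT : T = T₁ / Real.log k) (hTsmall : T ≤ ε₁ ^ 2) :
    (∫ θ in {θ ∈ Θ | ε₁ ≤ enorm' (θ - θhat)}, Real.exp (-(Q θ - Q θhat) / T)) /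
        (∫ θ in Θ, Real.exp (-(Q θ - Q θhat) / T))
      ≤ ((volume Θ).toReal /
            ∫ h in {h : Fin p → ℝ | enorm' h ≤ 1}, Real.exp (-lamhi * enorm' h ^ 2))
          * T ^ (-(p : ℝ) / 2) * (k : ℝ) ^ (-(lamhi * ε₂ ^ 2) / T₁)
    ∧ ((volume Θ).toReal /
            ∫ h in {h : Fin p → ℝ | enorm' h ≤ 1}, Real.exp (-lamhi * enorm' h ^ 2))
          * T ^ (-(p : ℝ) / 2) * (k : ℝ) ^ (-(lamhi * ε₂ ^ 2) / T₁)
      = ((volume Θ).toReal * T₁ ^ (-(p : ℝ) / 2) /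
            ∫ h in {h : Fin p → ℝ | enorm' h ≤ 1}, Real.exp (-lamhi * enorm' h ^ 2))
          * Real.log k ^ ((p : ℝ) / 2) * (k : ℝ) ^ (-(lamhi * ε₂ ^ 2) / T₁) := by
  have hint : IntegrableOn (fun θ => Real.exp (-(Q θ - Q θhat) / T)) Θ :=
    ContinuousOn.integrableOn_compact hΘcomp (by fun_prop)
  simpa only [Module.finrank_fin_fun, euclideanSeminorm_apply, Measure.real] using
    gibbs_tail_bound_general volume (euclideanSeminorm p) hvolfin.ne hint hε₁.le hball
      (fun θ hθ => (ha θ hθ).2) hb hT₁ (Nat.one_lt_cast.2 hk) hT hTsmall
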